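/- Let n ≥ 4 and let D_n denote the tree on n vertices obtained from a path on n−1 vertices by attaching one extra leaf to the second vertex of the path (the Dynkin diagram of type D_n). Then for all integers k, m: dim SH^k(D_n, m) = 1 if k = m and 0 ≤ k ≤ n; dim SH^k(D_n, m) = 1 if m = k+1 and 1 ≤ k ≤ n−3; and dim SH^k(D_n, m) = 0 otherwise. Equivalently, P_{D_n}(q,t) = P_{A_n}(q,t) + qt²·P_{A_{n−4}}(q,t). -/

import Mathlib

open Polynomial Matrix

attribute [local instance] Classical.propDecidable

namespace Seifert

variable {V : Type} [Fintype V]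

/-- A matching of a graph `G`: a finite set of edges of `G` that are pairwise disjoint. -/
def IsMatching (G : SimpleGraph V) (R : Finset (Sym2 V)) : Prop :=
  (∀ e ∈ R, e ∈ G.edgeSet) ∧
    ∀ e ∈ R, ∀ f ∈ R, e ≠ f → ∀ v : V, v ∈ e → v ∉ f

/-- A perfect matching: a matching covering every vertex. -/
def IsPerfectMatching (G : SimpleGraph V) (R : Finset (Sym2 V)) : Prop :=
  IsMatching G R ∧ ∀ v : V, ∃ e ∈ R, v ∈ e

/-- A configuration on `G`: a matching (the set of red edges) together with an assignment
of a sign (`true` = plus, `false` = minus) to every vertex not covered by a red edge;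
vertices covered by a red edge get `none`. -/
structure Config (G : SimpleGraph V) where
  red : Finset (Sym2 V)
  matching : IsMatching G red
  sign : V → Option Bool
  sign_none : ∀ v : V, sign v = none ↔ ∃ e ∈ red, v ∈ e

instance (G : SimpleGraph V) : Finite (Config G) :=
  Finite.of_injective (fun C => (C.red, C.sign)) (by
    rintro ⟨r, hr, s, hs⟩ ⟨r', hr', s', hs'⟩ h
    simp only [Prod.mk.injEq] at h
    obtain ⟨h1, h2⟩ := h
    subst h1; subst h2; rfl)

noncomputable instance (G : SimpleGraph V) : Fintype (Config G) := Fintype.ofFinite _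

/-- The grading `Q`: the number of minuses. -/
noncomputable def Qg {G : SimpleGraph V} (C : Config G) : ℕ :=
  (Finset.univ.filter fun v : V => C.sign v = some false).card

/-- The grading `E`: the number of minuses plus the number of red edges. -/
noncomputable def Eg {G : SimpleGraph V} (C : Config G) : ℕ := Qg C + C.red.card

/-- `DStep C C'` holds iff `C'` is one of the summands of `D(C)`: it is obtained from `C`
by deleting one red edge `e` and assigning a plus to one endpoint of `e` and a minus to
the other. -/
def DStep {G : SimpleGraph V} (C C' : Config G) : Prop :=
  ∃ e ∈ C.red, C'.red = C.red.erase e ∧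
    (∀ x : V, x ∉ e → C'.sign x = C.sign x) ∧
    ∃ u v : V, e = s(u, v) ∧ C'.sign u = some true ∧ C'.sign v = some false

/-- `dStep C C'` holds iff `C'` is one of the summands of `d(C)`: it is obtained from `C`
by changing the sign of one vertex from plus to minus. -/
def dStep {G : SimpleGraph V} (C C' : Config G) : Prop :=
  C'.red = C.red ∧ ∃ w : V, C.sign w = some true ∧ C'.sign w = some false ∧
    ∀ x : V, x ≠ w → C'.sign x = C.sign x

/-- The linear map on spaces of `F₂`-valued functions induced by a relation `r`:
the basis vector of `a` is sent to the sum of the basis vectors of all `b` with `r a b`. -/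
noncomputable def sumLin {α β : Type} [Fintype α] (r : α → β → Prop) :
    (α → ZMod 2) →ₗ[ZMod 2] (β → ZMod 2) where
  toFun f b := ∑ a : α, if r a b then f a else 0
  map_add' f g := by
    funext b
    simp only [Pi.add_apply]
    rw [← Finset.sum_add_distrib]
    exact Finset.sum_congr rfl fun a _ => by by_cases h : r a b <;> simp [h]
  map_smul' c f := by
    funext b
    simp only [RingHom.id_apply, Pi.smul_apply, smul_eq_mul, Finset.mul_sum]
    exact Finset.sum_congr rfl fun a _ => by by_cases h : r a b <;> simp [h]

/-- The differential `D` on the total Seifert complex `SC(T)`. -/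
noncomputable def Dmap (G : SimpleGraph V) :
    (Config G → ZMod 2) →ₗ[ZMod 2] (Config G → ZMod 2) :=
  sumLin DStep

/-- The differential `d` on the total Seifert complex `SC(T)`. -/
noncomputable def dmap (G : SimpleGraph V) :
    (Config G → ZMod 2) →ₗ[ZMod 2] (Config G → ZMod 2) :=
  sumLin dStep

/-- The graded piece `SC^k(T,n)`: the `F₂`-vector space with basis the configurations
with `Q = k` and `E = n`. -/
abbrev SC (G : SimpleGraph V) (k n : ℤ) : Type :=
  {C : Config G // (Qg C : ℤ) = k ∧ (Eg C : ℤ) = n} → ZMod 2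

/-- The differential `D` between graded pieces. (Mathematically it is nonzero only
from `SC^k(T,n)` to `SC^{k+1}(T,n)`.) -/
noncomputable def Dgr (G : SimpleGraph V) (k n k' n' : ℤ) :
    SC G k n →ₗ[ZMod 2] SC G k' n' :=
  sumLin fun C C' => DStep C.1 C'.1

/-- The dimension of the cohomology `ker g / im f` at the middle term of `A —f→ B —g→ C`
(taking the image of `f` intersected with the kernel of `g`). -/
noncomputable def cohDim {A B M : Type} [AddCommGroup A] [AddCommGroup B] [AddCommGroup M]
    [Module (ZMod 2) A] [Module (ZMod 2) B] [Module (ZMod 2) M]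
    (f : A →ₗ[ZMod 2] B) (g : B →ₗ[ZMod 2] M) : ℕ :=
  Module.finrank (ZMod 2)
    (LinearMap.ker g ⧸ (LinearMap.range f).comap (LinearMap.ker g).subtype)

/-- The dimension of the Seifert cohomology `SH^k(T,n)`. -/
noncomputable def SHdim (G : SimpleGraph V) (k n : ℤ) : ℕ :=
  cohDim (Dgr G (k - 1) n k n) (Dgr G k n (k + 1) n)

/-- The Seifert matrix of a graph with respect to an enumeration of its vertices. -/
noncomputable def seifertMatrix (G : SimpleGraph V) {m : ℕ} (e : V ≃ Fin m) :
    Matrix (Fin m) (Fin m) ℤ := fun i j =>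
  if i = j then -1 else if i < j ∧ G.Adj (e.symm i) (e.symm j) then 1 else 0

/-- The Alexander polynomial `det (t S - Sᵀ)` of a graph with respect to an enumeration
of its vertices. -/
noncomputable def alexDet (G : SimpleGraph V) {m : ℕ} (e : V ≃ Fin m) : Polynomial ℤ :=
  let S : Matrix (Fin m) (Fin m) (Polynomial ℤ) :=
    (seifertMatrix G e).map fun a => (Polynomial.C a : Polynomial ℤ)
  ((X : Polynomial ℤ) • S - Sᵀ).det

/-- The Alexander polynomial of a graph (or forest), defined as the matching polynomial
`Σ_R t^{|R|} (1-t)^{V - 2|R|}`, the sum being over all matchings `R`. -/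
noncomputable def alexMatch (G : SimpleGraph V) : Polynomial ℤ :=
  ∑ R : {R : Finset (Sym2 V) // IsMatching G R},
    X ^ R.1.card * (1 - X) ^ (Fintype.card V - 2 * R.1.card)


/-- The Dynkin diagram `D_n`: a path on the `n - 1` vertices `1, …, n-1` together with an
extra leaf `0` attached to the second vertex `2` of the path. -/
def dynkinD (n : ℕ) : SimpleGraph (Fin n) :=
  SimpleGraph.fromRel fun i j =>
    ((i : ℕ) = 0 ∧ (j : ℕ) = 2) ∨ (1 ≤ (i : ℕ) ∧ (j : ℕ) = (i : ℕ) + 1)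

set_option linter.unusedSectionVars false

/-- `C'` is obtained from `C` by removing the red edge `uv`, with plus at `u`, minus at `v`. -/
def Rel {G : SimpleGraph V} (C C' : Config G) (u v : V) : Prop :=
  s(u, v) ∈ C.red ∧ (∀ e, e ∈ C'.red ↔ e ∈ C.red ∧ e ≠ s(u, v)) ∧
    (∀ x, x ≠ u → x ≠ v → C'.sign x = C.sign x) ∧
    C'.sign u = some true ∧ C'.sign v = some false

theorem config_ext {G : SimpleGraph V} {C C' : Config G} (h1 : ∀ e, e ∈ C.red ↔ e ∈ C'.red)
    (h2 : ∀ x, C.sign x = C'.sign x) : C = C' := by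
  obtain ⟨r, hr, s, hs⟩ := C
  obtain ⟨r', hr', s', hs'⟩ := C'
  have e1 : r = r' := Finset.ext h1
  have e2 : s = s' := funext h2
  subst e1; subst e2; rfl

theorem dstep_iff {G : SimpleGraph V} {C C' : Config G} :
    DStep C C' ↔ ∃ u v, Rel C C' u v := by
  constructor
  · rintro ⟨e, he, hr, hs, u, v, rfl, hu, hv⟩
    refine ⟨u, v, he, ?_, ?_, hu, hv⟩
    · intro f; rw [hr, Finset.mem_erase]; tauto
    · intro x hx hy; apply hs; simp [hx, hy]
  · rintro ⟨u, v, he, hr, hs, hu, hv⟩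
    refine ⟨s(u, v), he, ?_, ?_, u, v, rfl, hu, hv⟩
    · ext f; rw [hr, Finset.mem_erase]; tauto
    · intro x hx; simp at hx; exact hs x hx.1 hx.2

theorem red_ne {G : SimpleGraph V} {C : Config G} {u v : V} (h : s(u, v) ∈ C.red) : u ≠ v :=
  (C.matching.1 _ h : G.Adj u v).ne

theorem red_sign {G : SimpleGraph V} {C : Config G} {u v : V} (h : s(u, v) ∈ C.red) :
    C.sign u = none ∧ C.sign v = none :=
  ⟨(C.sign_none u).2 ⟨_, h, by simp⟩, (C.sign_none v).2 ⟨_, h, by simp⟩⟩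

theorem exists_resolve {G : SimpleGraph V} {C : Config G} {u v : V} (h : s(u, v) ∈ C.red) :
    ∃ C', Rel C C' u v := by
  have huv := red_ne h
  refine ⟨⟨C.red.erase s(u, v), ⟨fun e he => C.matching.1 e (Finset.mem_of_mem_erase he),
    fun e he f hf => C.matching.2 e (Finset.mem_of_mem_erase he) f (Finset.mem_of_mem_erase hf)⟩,
    fun x => if x = u then some true else if x = v then some false else C.sign x, ?_⟩,
    h, ?_, ?_, ?_, ?_⟩
  · intro x
    by_cases hx : x = u
    · subst hx
      simp only [if_true, reduceCtorEq, false_iff]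
      rintro ⟨e, he, hxe⟩
      rw [Finset.mem_erase] at he
      exact C.matching.2 e he.2 _ h he.1 x hxe (by simp)
    by_cases hy : x = v
    · subst hy
      simp only [hx, if_true, if_false, reduceCtorEq, false_iff]
      rintro ⟨e, he, hxe⟩
      rw [Finset.mem_erase] at he
      exact C.matching.2 e he.2 _ h he.1 x hxe (by simp)
    simp only [hx, hy, if_false]
    rw [C.sign_none]
    constructor
    · rintro ⟨e, he, hxe⟩
      refine ⟨e, ?_, hxe⟩
      rw [Finset.mem_erase]
      refine ⟨?_, he⟩
      rintro rfl
      simp [hx, hy] at hxe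
    · rintro ⟨e, he, hxe⟩
      exact ⟨e, Finset.mem_of_mem_erase he, hxe⟩
  · intro e; rw [Finset.mem_erase]; tauto
  · intro x hx hy; simp [hx, hy]
  · simp
  · simp [huv.symm]

theorem exists_contract {G : SimpleGraph V} {C' : Config G} {u v : V} (h : G.Adj u v)
    (hu : C'.sign u = some true) (hv : C'.sign v = some false) :
    ∃ C, Rel C C' u v := by
  have huv := h.ne
  have nu : ∀ e ∈ C'.red, u ∉ e := fun e he hx => by
    have := (C'.sign_none u).2 ⟨e, he, hx⟩; simp [hu] at this
  have nv : ∀ e ∈ C'.red, v ∉ e := fun e he hx => by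
    have := (C'.sign_none v).2 ⟨e, he, hx⟩; simp [hv] at this
  refine ⟨⟨insert s(u, v) C'.red, ⟨?_, ?_⟩,
    fun x => if x = u then none else if x = v then none else C'.sign x, ?_⟩,
    ?_, ?_, ?_, hu, hv⟩
  · intro e he
    rw [Finset.mem_insert] at he
    rcases he with rfl | he
    · exact h
    · exact C'.matching.1 e he
  · intro e he f hf hef x hxe hxf
    rw [Finset.mem_insert] at he hf
    rcases he with rfl | he <;> rcases hf with rfl | hf
    · exact hef rfl
    · rw [Sym2.mem_iff] at hxe
      rcases hxe with rfl | rfl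
      · exact nu _ hf hxf
      · exact nv _ hf hxf
    · rw [Sym2.mem_iff] at hxf
      rcases hxf with rfl | rfl
      · exact nu _ he hxe
      · exact nv _ he hxe
    · exact C'.matching.2 e he f hf hef x hxe hxf
  · intro x
    by_cases hx : x = u
    · subst hx
      simp only [if_true, true_iff]
      exact ⟨s(x, v), by simp, by simp⟩
    by_cases hy : x = v
    · subst hy
      simp only [if_true, ite_self, true_iff]
      exact ⟨s(u, x), by simp, by simp⟩
    simp only [hx, hy, if_false]
    rw [C'.sign_none]
    constructor
    · rintro ⟨e, he, hxe⟩
      exact ⟨e, by simp [he], hxe⟩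
    · rintro ⟨e, he, hxe⟩
      rw [Finset.mem_insert] at he
      rcases he with rfl | he
      · simp [hx, hy] at hxe
      · exact ⟨e, he, hxe⟩
  · simp
  · intro e
    simp only [Finset.mem_insert]
    constructor
    · intro he
      refine ⟨Or.inr he, ?_⟩
      rintro rfl
      exact nu _ he (by simp)
    · tauto
  · intro x hx hy; simp [hx, hy]

theorem Rel.none {G : SimpleGraph V} {C C' : Config G} {u v : V} (h : Rel C C' u v) :
    C.sign u = none ∧ C.sign v = none := red_sign h.1

theorem Rel.adj {G : SimpleGraph V} {C C' : Config G} {u v : V} (h : Rel C C' u v) :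
    G.Adj u v := C.matching.1 _ h.1

theorem Rel.right_unique {G : SimpleGraph V} {C C' C'' : Config G} {u v : V} (h : Rel C C' u v)
    (h' : Rel C C'' u v) : C' = C'' := by
  apply config_ext
  · intro e; rw [h.2.1, h'.2.1]
  · intro x
    by_cases hx : x = u
    · rw [hx, h.2.2.2.1, h'.2.2.2.1]
    by_cases hy : x = v
    · rw [hy, h.2.2.2.2, h'.2.2.2.2]
    rw [h.2.2.1 x hx hy, h'.2.2.1 x hx hy]

theorem Rel.left_unique {G : SimpleGraph V} {C C' C'' : Config G} {u v : V} (h : Rel C C'' u v)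
    (h' : Rel C' C'' u v) : C = C' := by
  apply config_ext
  · intro e
    have h1 := h.2.1 e
    have h2 := h'.2.1 e
    by_cases he : e = s(u, v)
    · subst he; simp [h.1, h'.1]
    · tauto
  · intro x
    by_cases hx : x = u
    · rw [hx, h.none.1, h'.none.1]
    by_cases hy : x = v
    · rw [hy, h.none.2, h'.none.2]
    rw [← h.2.2.1 x hx hy, ← h'.2.2.1 x hx hy]

/-- Weighted number of minuses. -/
noncomputable def wt {G : SimpleGraph V} (w : V → ℕ) (C : Config G) : ℕ :=
  ∑ x : V, if C.sign x = some false then w x else 0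

theorem Rel.wt_eq {G : SimpleGraph V} {C C' : Config G} {u v : V} (h : Rel C C' u v)
    (w : V → ℕ) : wt w C' = wt w C + w v := by
  have h1 : w v = ∑ x : V, if x = v then w x else 0 := by simp
  rw [h1]
  unfold wt
  rw [← Finset.sum_add_distrib]
  refine Finset.sum_congr rfl fun x _ => ?_
  have huv := h.adj.ne
  by_cases hx : x = u
  · subst hx; simp [h.none.1, h.2.2.2.1, huv]
  by_cases hy : x = v
  · subst hy; simp [h.none.2, h.2.2.2.2]
  simp [h.2.2.1 x hx hy, hy]

theorem Qg_eq_wt {G : SimpleGraph V} (C : Config G) : Qg C = wt (fun _ => 1) C := by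
  unfold Qg wt; rw [Finset.card_filter]

theorem Rel.Qg_eq {G : SimpleGraph V} {C C' : Config G} {u v : V} (h : Rel C C' u v) :
    Qg C' = Qg C + 1 := by
  rw [Qg_eq_wt, Qg_eq_wt, h.wt_eq]

theorem Rel.card_eq {G : SimpleGraph V} {C C' : Config G} {u v : V} (h : Rel C C' u v) :
    C'.red.card + 1 = C.red.card := by
  have : C'.red = C.red.erase s(u, v) := by
    ext e; rw [h.2.1, Finset.mem_erase]; tauto
  rw [this, Finset.card_erase_add_one h.1]

theorem Rel.Eg_eq {G : SimpleGraph V} {C C' : Config G} {u v : V} (h : Rel C C' u v) :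
    Eg C' = Eg C := by
  unfold Eg; have := h.Qg_eq; have := h.card_eq; omega

/-- Two steps can be exchanged. -/
theorem Rel.swap {G : SimpleGraph V} {C C1 C2 : Config G} {u v x y : V} (h : Rel C C1 u v)
    (h' : Rel C1 C2 x y) : ∃ C3, Rel C C3 x y ∧ Rel C3 C2 u v ∧ C3 ≠ C1 := by
  have hxy : s(x, y) ∈ C.red ∧ s(x, y) ≠ s(u, v) := (h.2.1 _).1 h'.1
  obtain ⟨C3, h3⟩ := exists_resolve hxy.1
  have n := h'.none
  have hu := h.2.2.2.1
  have hv := h.2.2.2.2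
  have xu : x ≠ u := by rintro rfl; simp [hu] at n
  have xv : x ≠ v := by rintro rfl; simp [hv] at n
  have yu : y ≠ u := by rintro rfl; simp [hu] at n
  have yv : y ≠ v := by rintro rfl; simp [hv] at n
  refine ⟨C3, h3, ⟨?_, ?_, ?_, ?_, ?_⟩, ?_⟩
  · rw [h3.2.1]; exact ⟨h.1, hxy.2.symm⟩
  · intro e; rw [h'.2.1, h.2.1, h3.2.1]; tauto
  · intro z zu zv
    by_cases zx : z = x
    · rw [zx, h'.2.2.2.1, h3.2.2.2.1]
    by_cases zy : z = y
    · rw [zy, h'.2.2.2.2, h3.2.2.2.2]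
    rw [h'.2.2.1 z zx zy, h3.2.2.1 z zx zy, h.2.2.1 z zu zv]
  · rw [h'.2.2.1 u xu.symm yu.symm, hu]
  · rw [h'.2.2.1 v xv.symm yv.symm, hv]
  · rintro rfl
    have := h3.2.1 s(x, y)
    simp [h'.1] at this

/-- Between `C` and `C2` there are at most two intermediate configurations. -/
theorem Rel.between {G : SimpleGraph V} {C C1 C2 C3 C4 : Config G} {u v x y a b c d : V}
    (h : Rel C C1 u v) (h' : Rel C1 C2 x y) (h3 : Rel C C3 x y)
    (ha : Rel C C4 a b) (hc : Rel C4 C2 c d) : C4 = C1 ∨ C4 = C3 := by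
  have key : ∀ {D D' : Config G} {u v a b x y c d : V}, Rel C D u v → Rel D C2 x y →
      Rel C D' a b → Rel D' C2 c d → s(a, b) = s(u, v) → D' = D := by
    intro D D' u v a b x y c d h h' ha hc he
    have sg : ∀ {D : Config G} {u v x y z : V}, Rel C D u v → Rel D C2 x y → (z = u ∨ z = v) →
        D.sign z = C2.sign z := by
      intro D u v x y z h h' hz
      have hz' : D.sign z ≠ Option.none := by
        rcases hz with rfl | rfl
        · rw [h.2.2.2.1]; simp
        · rw [h.2.2.2.2]; simp
      rw [h'.2.2.1 z]
      · rintro rfl; exact hz' h'.none.1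
      · rintro rfl; exact hz' h'.none.2
    apply config_ext
    · intro e; rw [h.2.1, ha.2.1, he]
    · intro z
      have hz : (z = a ∨ z = b) ↔ (z = u ∨ z = v) := by
        rw [← Sym2.mem_iff, ← Sym2.mem_iff, he]
      by_cases hh : z = u ∨ z = v
      · rw [sg h h' hh, sg ha hc (hz.2 hh)]
      · have hh' := hh
        rw [← hz] at hh'
        push Not at hh hh'
        rw [h.2.2.1 z hh.1 hh.2, ha.2.2.1 z hh'.1 hh'.2]
  have hab : s(a, b) = s(u, v) ∨ s(a, b) = s(x, y) := by
    by_contra hcon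
    push Not at hcon
    have h1 : s(a, b) ∈ C2.red := (h'.2.1 _).2 ⟨(h.2.1 _).2 ⟨ha.1, hcon.1⟩, hcon.2⟩
    have h2 := (hc.2.1 _).1 h1
    have h3 := (ha.2.1 _).1 h2.1
    exact h3.2 rfl
  obtain ⟨C5, h5, h5', -⟩ := h.swap h'
  have := h5.right_unique h3
  subst this
  rcases hab with e | e
  · exact Or.inl (key h h' ha hc e)
  · exact Or.inr (key h5 h5' ha hc e)

theorem between_even {G : SimpleGraph V} (C C2 : Config G) :
    (∑ C1 : Config G, if DStep C C1 ∧ DStep C1 C2 then (1 : ZMod 2) else 0) = 0 := by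
  by_cases h : ∃ C1, DStep C C1 ∧ DStep C1 C2
  · obtain ⟨C1, h1, h2⟩ := h
    obtain ⟨u, v, h1⟩ := dstep_iff.1 h1
    obtain ⟨x, y, h2⟩ := dstep_iff.1 h2
    obtain ⟨C3, h3, h4, hne⟩ := h1.swap h2
    have : ∀ D : Config G, (DStep C D ∧ DStep D C2) ↔ D ∈ ({C1, C3} : Finset (Config G)) := by
      intro D
      rw [Finset.mem_insert, Finset.mem_singleton]
      constructor
      · rintro ⟨ha, hb⟩
        obtain ⟨a, b, ha⟩ := dstep_iff.1 ha
        obtain ⟨c, d, hc⟩ := dstep_iff.1 hb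
        exact h1.between h2 h3 ha hc
      · rintro (rfl | rfl)
        · exact ⟨dstep_iff.2 ⟨_, _, h1⟩, dstep_iff.2 ⟨_, _, h2⟩⟩
        · exact ⟨dstep_iff.2 ⟨_, _, h3⟩, dstep_iff.2 ⟨_, _, h4⟩⟩
    simp_rw [this]
    rw [Finset.sum_ite_mem, Finset.univ_inter, Finset.sum_pair hne.symm]
    decide
  · push Not at h
    refine Finset.sum_eq_zero fun D _ => if_neg ?_
    rintro ⟨a, b⟩; exact h D a b

theorem aug_even {G : SimpleGraph V} (C : Config G) (hC : C.red.card = 1) :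
    (∑ C1 : Config G, if DStep C C1 then (1 : ZMod 2) else 0) = 0 := by
  obtain ⟨e, he⟩ := Finset.card_eq_one.1 hC
  induction e using Sym2.ind with
  | _ u v =>
  have hm : s(u, v) ∈ C.red := by simp [he]
  have hm' : s(v, u) ∈ C.red := by rw [Sym2.eq_swap]; exact hm
  obtain ⟨C1, h1⟩ := exists_resolve hm
  obtain ⟨C2, h2⟩ := exists_resolve hm'
  have hne : C1 ≠ C2 := by
    rintro rfl
    have := h1.2.2.2.1
    rw [h2.2.2.2.2] at this
    simp at this
  have : ∀ D : Config G, DStep C D ↔ D ∈ ({C1, C2} : Finset (Config G)) := by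
    intro D
    rw [Finset.mem_insert, Finset.mem_singleton]
    constructor
    · intro ha
      obtain ⟨a, b, ha⟩ := dstep_iff.1 ha
      have := ha.1
      rw [he, Finset.mem_singleton, Sym2.eq_iff] at this
      rcases this with ⟨rfl, rfl⟩ | ⟨rfl, rfl⟩
      · exact Or.inl (ha.right_unique h1)
      · exact Or.inr (ha.right_unique h2)
    · rintro (rfl | rfl)
      · exact dstep_iff.2 ⟨_, _, h1⟩
      · exact dstep_iff.2 ⟨_, _, h2⟩
  simp_rw [this]
  rw [Finset.sum_ite_mem, Finset.univ_inter, Finset.sum_pair hne]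
  decide

/-! ### Linear algebra -/

theorem sum_sub {α : Type} [Fintype α] (P : α → Prop) [DecidablePred P] (F : α → ZMod 2)
    (h : ∀ a, F a ≠ 0 → P a) : ∑ a : {a // P a}, F a.1 = ∑ a, F a := by
  rw [← Finset.sum_subtype (Finset.univ.filter P) (by simp) F]
  refine Finset.sum_subset (Finset.subset_univ _) fun a _ ha => ?_
  by_contra hc
  exact ha (by simp [h a hc])

theorem Dgr_comp (G : SimpleGraph V) (k k' k'' m : ℤ) (hk : k' = k + 1) :
    (Dgr G k' m k'' m).comp (Dgr G k m k' m) = 0 := by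
  apply LinearMap.ext
  intro f
  funext c
  have e1 : (Dgr G k' m k'' m).comp (Dgr G k m k' m) f c =
      ∑ b : {C : Config G // (Qg C : ℤ) = k' ∧ (Eg C : ℤ) = m}, if DStep b.1 c.1 then
        ∑ a : {C : Config G // (Qg C : ℤ) = k ∧ (Eg C : ℤ) = m},
          (if DStep a.1 b.1 then f a else 0) else 0 := rfl
  rw [e1]
  have e2 : ∀ b : {C : Config G // (Qg C : ℤ) = k' ∧ (Eg C : ℤ) = m},
      (if DStep b.1 c.1 then
        ∑ a : {C : Config G // (Qg C : ℤ) = k ∧ (Eg C : ℤ) = m},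
          (if DStep a.1 b.1 then f a else 0) else 0) =
      ∑ a : {C : Config G // (Qg C : ℤ) = k ∧ (Eg C : ℤ) = m},
        f a * (if DStep a.1 b.1 ∧ DStep b.1 c.1 then 1 else 0) := by
    intro b
    by_cases h : DStep b.1 c.1
    · simp [h]
    · simp [h]
  simp_rw [e2]
  rw [Finset.sum_comm]
  refine Finset.sum_eq_zero fun a _ => ?_
  rw [← Finset.mul_sum]
  have e3 : (∑ b : {C : Config G // (Qg C : ℤ) = k' ∧ (Eg C : ℤ) = m},
      (if DStep a.1 b.1 ∧ DStep b.1 c.1 then (1 : ZMod 2) else 0)) =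
      ∑ b : Config G, if DStep a.1 b ∧ DStep b c.1 then (1 : ZMod 2) else 0 := by
    refine sum_sub (fun C : Config G => (Qg C : ℤ) = k' ∧ (Eg C : ℤ) = m)
      (fun b => if DStep a.1 b ∧ DStep b c.1 then (1 : ZMod 2) else 0) ?_
    intro b hb
    have hb' : DStep a.1 b ∧ DStep b c.1 := by
      by_contra hcon; simp [hcon] at hb
    obtain ⟨u, v, h⟩ := dstep_iff.1 hb'.1
    have h1 := h.Qg_eq
    have h2 := h.Eg_eq
    have h3 := a.2
    omega
  rw [e3, between_even, mul_zero]

theorem cohDim_eq {A B M : Type} [AddCommGroup A] [AddCommGroup B] [AddCommGroup M]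
    [Module (ZMod 2) A] [Module (ZMod 2) B] [Module (ZMod 2) M] [Module.Finite (ZMod 2) B]
    (f : A →ₗ[ZMod 2] B) (g : B →ₗ[ZMod 2] M) (h : g.comp f = 0) :
    cohDim f g + Module.finrank (ZMod 2) (LinearMap.range f) +
      Module.finrank (ZMod 2) (LinearMap.range g) = Module.finrank (ZMod 2) B := by
  have hle : LinearMap.range f ≤ LinearMap.ker g := LinearMap.range_le_ker_iff.2 h
  have h1 := Submodule.finrank_quotient_add_finrank
    ((LinearMap.range f).comap (LinearMap.ker g).subtype)
  have h2 := LinearMap.finrank_range_add_finrank_ker g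
  have h3 : Module.finrank (ZMod 2) ((LinearMap.range f).comap (LinearMap.ker g).subtype) =
      Module.finrank (ZMod 2) (LinearMap.range f) :=
    (Submodule.comapSubtypeEquivOfLe hle).finrank_eq
  unfold cohDim
  omega

theorem rank_lower {α : Type} [Fintype α] {M : Type} [AddCommGroup M] [Module (ZMod 2) M]
    (g : (α → ZMod 2) →ₗ[ZMod 2] M) (U : α → Prop)
    (h : ∀ f, (∀ a, ¬ U a → f a = 0) → g f = 0 → f = 0) :
    (Finset.univ.filter U).card ≤ Module.finrank (ZMod 2) (LinearMap.range g) := by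
  let ι : ({a // U a} → ZMod 2) →ₗ[ZMod 2] (α → ZMod 2) :=
    { toFun := fun f a => if h : U a then f ⟨a, h⟩ else 0
      map_add' := by
        intro f f'; funext a; by_cases h : U a <;> simp [h]
      map_smul' := by
        intro c f; funext a; by_cases h : U a <;> simp [h] }
  have hinj : Function.Injective (g.rangeRestrict.comp ι) := by
    rw [← LinearMap.ker_eq_bot, LinearMap.ker_eq_bot']
    intro f hf
    have hf' : g (ι f) = 0 := by
      have := congrArg Subtype.val hf
      simpa using this
    have := h (ι f) (by intro a ha; simp [ι, ha]) hf'
    funext a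
    have := congrFun this a.1
    simpa [ι, a.2] using this
  have := LinearMap.finrank_le_finrank_of_injective hinj
  rw [Module.finrank_fintype_fun_eq_card, Fintype.card_subtype] at this
  exact this

theorem aug_rank (G : SimpleGraph V) (k m : ℤ) (hk : m = k + 1)
    (hne : Nonempty {C : Config G // (Qg C : ℤ) = m ∧ (Eg C : ℤ) = m}) :
    Module.finrank (ZMod 2) (LinearMap.range (Dgr G k m m m)) + 1 ≤
      Fintype.card {C : Config G // (Qg C : ℤ) = m ∧ (Eg C : ℤ) = m} := by
  let φ : SC G m m →ₗ[ZMod 2] ZMod 2 := ∑ c, LinearMap.proj c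
  have hφ : ∀ f, φ f = ∑ c, f c := fun f => by simp [φ]
  have hle : LinearMap.range (Dgr G k m m m) ≤ LinearMap.ker φ := by
    rintro _ ⟨f, rfl⟩
    rw [LinearMap.mem_ker, hφ]
    change (∑ b : {C : Config G // (Qg C : ℤ) = m ∧ (Eg C : ℤ) = m},
      ∑ a : {C : Config G // (Qg C : ℤ) = k ∧ (Eg C : ℤ) = m},
        if DStep a.1 b.1 then f a else 0) = 0
    rw [Finset.sum_comm]
    refine Finset.sum_eq_zero fun a _ => ?_
    have e2 : ∀ b : {C : Config G // (Qg C : ℤ) = m ∧ (Eg C : ℤ) = m},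
      (if DStep a.1 b.1 then f a else 0) = f a * (if DStep a.1 b.1 then 1 else 0) := by
      intro b; split_ifs <;> simp
    simp_rw [e2]
    rw [← Finset.mul_sum]
    have hc : a.1.red.card = 1 := by
      have h1 := a.2.1
      have h2 := a.2.2
      unfold Eg at h2
      push_cast at h2
      omega
    have e3 : (∑ b : {C : Config G // (Qg C : ℤ) = m ∧ (Eg C : ℤ) = m},
        (if DStep a.1 b.1 then (1 : ZMod 2) else 0)) =
        ∑ b : Config G, if DStep a.1 b then (1 : ZMod 2) else 0 := by
      refine sum_sub (fun C : Config G => (Qg C : ℤ) = m ∧ (Eg C : ℤ) = m)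
        (fun b => if DStep a.1 b then (1 : ZMod 2) else 0) ?_
      intro b hb
      have hb' : DStep a.1 b := by
        by_contra hcon; simp [hcon] at hb
      obtain ⟨u, v, h⟩ := dstep_iff.1 hb'
      have h1 := h.Qg_eq
      have h2 := h.Eg_eq
      have h3 := a.2
      omega
    rw [e3, aug_even _ hc, mul_zero]
  have hsurj : LinearMap.range φ = ⊤ := by
    rw [LinearMap.range_eq_top]
    obtain ⟨c⟩ := hne
    intro x
    exact ⟨Pi.single c x, by rw [hφ]; simp⟩
  have h1 := LinearMap.finrank_range_add_finrank_ker φ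
  rw [hsurj, finrank_top, Module.finrank_self, Module.finrank_fintype_fun_eq_card] at h1
  have h2 := Submodule.finrank_mono hle
  omega

/-! ### Abstract Morse matching -/

section Morse

variable {G : SimpleGraph V} (Piv : Config G → V → V → Prop)

/-- Matched upwards. -/
def Up (C : Config G) : Prop := ∃ u v, s(u, v) ∈ C.red ∧ Piv C u v

/-- Matched downwards. -/
def Dn (C : Config G) : Prop :=
  ∃ u v, G.Adj u v ∧ C.sign u = some true ∧ C.sign v = some false ∧ Piv C u v

theorem up_inj (k k' m : ℤ) (hk : k' = k + 1) (ω : Config G → ℕ)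
    (hω : ∀ C C' C1 u v x y, Rel C C' u v → Piv C u v → Rel C1 C' x y → Up Piv C1 → C1 ≠ C →
      ω C < ω C1)
    (f : SC G k m) (hf : ∀ a, ¬ Up Piv a.1 → f a = 0) (h0 : Dgr G k m k' m f = 0) : f = 0 := by
  by_contra hne
  have hex : (Finset.univ.filter fun a => f a ≠ 0).Nonempty := by
    by_contra hcon
    rw [Finset.not_nonempty_iff_eq_empty, Finset.filter_eq_empty_iff] at hcon
    apply hne
    funext a
    have := hcon (Finset.mem_univ a)
    simpa using this
  obtain ⟨a, ha, hmax⟩ := Finset.exists_max_image _ (fun a => ω a.1) hex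
  simp only [Finset.mem_filter, Finset.mem_univ, true_and] at ha hmax
  have hU : Up Piv a.1 := by
    by_contra hcon; exact ha (hf a hcon)
  obtain ⟨u, v, huv, hp⟩ := hU
  obtain ⟨C', hr⟩ := exists_resolve huv
  have hC' : (Qg C' : ℤ) = k' ∧ (Eg C' : ℤ) = m := by
    have h1 := hr.Qg_eq
    have h2 := hr.Eg_eq
    have h3 := a.2
    omega
  have h1 := congrFun h0 ⟨C', hC'⟩
  have h2 : (∑ b : {C : Config G // (Qg C : ℤ) = k ∧ (Eg C : ℤ) = m},
      if DStep b.1 C' then f b else 0) = 0 := h1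
  rw [Finset.sum_eq_single a] at h2
  · rw [if_pos (dstep_iff.2 ⟨u, v, hr⟩)] at h2
    exact ha h2
  · intro b _ hb
    by_cases hs : DStep b.1 C'
    · rw [if_pos hs]
      by_contra hfb
      obtain ⟨x, y, hxy⟩ := dstep_iff.1 hs
      have hbU : Up Piv b.1 := by
        by_contra hcon; exact hfb (hf b hcon)
      have := hω a.1 C' b.1 u v x y hr hp hxy hbU (fun h => hb (Subtype.ext h))
      have := hmax b hfb
      omega
    · rw [if_neg hs]
  · intro h; exact absurd (Finset.mem_univ a) h

theorem card_up (k k' m : ℤ) (hk : k' = k + 1)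
    (hP : ∀ C C' u v, Rel C C' u v → (Piv C u v ↔ Piv C' u v))
    (hU : ∀ C u v x y, s(u, v) ∈ C.red → Piv C u v → s(x, y) ∈ C.red → Piv C x y →
      u = x ∧ v = y)
    (hD : ∀ C u v x y, G.Adj u v → C.sign u = some true → C.sign v = some false → Piv C u v →
      G.Adj x y → C.sign x = some true → C.sign y = some false → Piv C x y → u = x ∧ v = y) :
    (Finset.univ.filter fun a : {C : Config G // (Qg C : ℤ) = k ∧ (Eg C : ℤ) = m} =>
      Up Piv a.1).card =
    (Finset.univ.filter fun a : {C : Config G // (Qg C : ℤ) = k' ∧ (Eg C : ℤ) = m} =>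
      Dn Piv a.1).card := by
  have key : ∀ a : {C : Config G // (Qg C : ℤ) = k ∧ (Eg C : ℤ) = m}, Up Piv a.1 →
      ∃ b : {C : Config G // (Qg C : ℤ) = k' ∧ (Eg C : ℤ) = m},
        ∃ u v, Rel a.1 b.1 u v ∧ Piv a.1 u v := by
    rintro a ⟨u, v, huv, hp⟩
    obtain ⟨C', hr⟩ := exists_resolve huv
    refine ⟨⟨C', ?_⟩, u, v, hr, hp⟩
    have h1 := hr.Qg_eq
    have h2 := hr.Eg_eq
    have h3 := a.2
    omega
  choose i hi using key
  refine Finset.card_bij (fun a ha => i a (Finset.mem_filter.1 ha).2) ?_ ?_ ?_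
  · intro a ha
    simp only [Finset.mem_filter, Finset.mem_univ, true_and] at ha ⊢
    obtain ⟨u, v, hr, hp⟩ := hi a ha
    exact ⟨u, v, hr.adj, hr.2.2.2.1, hr.2.2.2.2, (hP _ _ _ _ hr).1 hp⟩
  · intro a ha b hb hab
    simp only [Finset.mem_filter, Finset.mem_univ, true_and] at ha hb
    obtain ⟨u, v, hr, hp⟩ := hi a ha
    obtain ⟨x, y, hr', hp'⟩ := hi b hb
    rw [← hab] at hr'
    obtain ⟨rfl, rfl⟩ := hD _ u v x y hr.adj hr.2.2.2.1 hr.2.2.2.2 ((hP _ _ _ _ hr).1 hp)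
      hr'.adj hr'.2.2.2.1 hr'.2.2.2.2 ((hP _ _ _ _ hr').1 hp')
    exact Subtype.ext (hr.left_unique hr')
  · intro b hb
    simp only [Finset.mem_filter, Finset.mem_univ, true_and] at hb
    obtain ⟨u, v, hadj, hu, hv, hp⟩ := hb
    obtain ⟨C, hr⟩ := exists_contract hadj hu hv
    have hpC := (hP _ _ _ _ hr).2 hp
    have hup : Up Piv C := ⟨u, v, hr.1, hpC⟩
    have hC : (Qg C : ℤ) = k ∧ (Eg C : ℤ) = m := by
      have h1 := hr.Qg_eq
      have h2 := hr.Eg_eq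
      have h3 := b.2
      omega
    refine ⟨⟨C, hC⟩, by simpa using hup, ?_⟩
    obtain ⟨x, y, hr', hp'⟩ := hi ⟨C, hC⟩ hup
    obtain ⟨rfl, rfl⟩ := hU _ u v x y hr.1 hpC hr'.1 hp'
    exact Subtype.ext (hr'.right_unique hr)

/-- The number of critical configurations in a bidegree. -/
noncomputable def ncrit (k m : ℤ) : ℕ :=
  (Finset.univ.filter fun a : {C : Config G // (Qg C : ℤ) = k ∧ (Eg C : ℤ) = m} =>
    ¬ Up Piv a.1 ∧ ¬ Dn Piv a.1).card

theorem SHdim_of_matching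
    (hP : ∀ C C' u v, Rel C C' u v → (Piv C u v ↔ Piv C' u v))
    (hU : ∀ C u v x y, s(u, v) ∈ C.red → Piv C u v → s(x, y) ∈ C.red → Piv C x y →
      u = x ∧ v = y)
    (hD : ∀ C u v x y, G.Adj u v → C.sign u = some true → C.sign v = some false → Piv C u v →
      G.Adj x y → C.sign x = some true → C.sign y = some false → Piv C x y → u = x ∧ v = y)
    (hUD : ∀ C, Up Piv C → ¬ Dn Piv C)
    (ω : Config G → ℕ)
    (hω : ∀ C C' C1 u v x y, Rel C C' u v → Piv C u v → Rel C1 C' x y → Up Piv C1 → C1 ≠ C →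
      ω C < ω C1)
    (hc : ∀ k m, k ≠ m → k + 1 ≠ m → ncrit Piv k m = 0)
    (hc' : ∀ m, ncrit Piv m m ≤ 1)
    (k m : ℤ) : SHdim G k m = ncrit Piv k m := by
  set dm : ℤ → ℕ := fun k => Fintype.card {C : Config G // (Qg C : ℤ) = k ∧ (Eg C : ℤ) = m}
    with hdm
  set up : ℤ → ℕ := fun k => (Finset.univ.filter fun a :
    {C : Config G // (Qg C : ℤ) = k ∧ (Eg C : ℤ) = m} => Up Piv a.1).card with hup
  set dn : ℤ → ℕ := fun k => (Finset.univ.filter fun a :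
    {C : Config G // (Qg C : ℤ) = k ∧ (Eg C : ℤ) = m} => Dn Piv a.1).card with hdn
  set r : ℤ → ℕ := fun k => Module.finrank (ZMod 2) (LinearMap.range (Dgr G k m (k + 1) m))
    with hr
  have hfr : ∀ k, Module.finrank (ZMod 2) (SC G k m) = dm k := fun k =>
    Module.finrank_fintype_fun_eq_card _
  have hcoh : ∀ k, SHdim G k m + r (k - 1) + r k = dm k := by
    intro k
    rw [← hfr]
    have h := cohDim_eq (Dgr G (k - 1) m k m) (Dgr G k m (k + 1) m)
      (Dgr_comp G (k - 1) k (k + 1) m (by ring))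
    have e : r (k - 1) = Module.finrank (ZMod 2) (LinearMap.range (Dgr G (k - 1) m k m)) := by
      simp only [hr]
      rw [sub_add_cancel]
    rw [e]; exact h
  have hsum : ∀ k, dm k = up k + dn k + ncrit Piv k m := by
    intro k
    simp only [hdm, hup, hdn, ncrit]
    rw [← Finset.card_union_of_disjoint, ← Finset.card_union_of_disjoint, ← Finset.card_univ]
    · congr 1
      ext a
      simp only [Finset.mem_union, Finset.mem_filter, Finset.mem_univ, true_and, true_iff]
      tauto
    · rw [Finset.disjoint_left]
      intro a
      simp only [Finset.mem_union, Finset.mem_filter, Finset.mem_univ, true_and]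
      tauto
    · rw [Finset.disjoint_left]
      intro a
      simp only [Finset.mem_filter, Finset.mem_univ, true_and]
      exact hUD a.1
  have hud : ∀ k, up k = dn (k + 1) := fun k => card_up Piv k (k + 1) m rfl hP hU hD
  have hlow : ∀ k, up k ≤ r k := fun k =>
    rank_lower (Dgr G k m (k + 1) m) _ (up_inj Piv k (k + 1) m rfl ω hω)
  have hrle : ∀ k, r k ≤ dm (k + 1) := fun k => by
    rw [← hfr]; exact Submodule.finrank_le _
  have hbig : ∀ k, m < k → dm k = 0 := by
    intro k hk
    simp only [hdm]
    rw [Fintype.card_eq_zero_iff]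
    refine ⟨fun a => ?_⟩
    have h1 := a.2.1
    have h2 := a.2.2
    unfold Eg at h2
    push_cast at h2
    omega
  have haug : dm m ≠ 0 → r (m - 1) + 1 ≤ dm m := by
    intro hne
    have hne' : Nonempty {C : Config G // (Qg C : ℤ) = m ∧ (Eg C : ℤ) = m} := by
      rw [← Fintype.card_pos_iff]; exact Nat.pos_of_ne_zero hne
    have h := aug_rank G (m - 1) m (by ring) hne'
    have e : r (m - 1) = Module.finrank (ZMod 2) (LinearMap.range (Dgr G (m - 1) m m m)) := by
      simp only [hr]
      rw [sub_add_cancel]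
    rw [e]; exact h
  have hrank : ∀ k, r k = up k := by
    intro k
    rcases lt_trichotomy k (m - 1) with hk | hk | hk
    · have h1 := hcoh k
      have h2 := hsum k
      have h3 := hc k m (by omega) (by omega)
      have h4 := hlow k
      have h5 := hlow (k - 1)
      have h6 := hud (k - 1)
      rw [sub_add_cancel] at h6
      omega
    · subst hk
      have h1 := hlow (m - 1)
      have h2 := hsum m
      have h3 := hud (m - 1)
      have h4 := hrle (m - 1)
      have h5 := hc' m
      have h6 := hud m
      have h7 := hsum (m + 1)
      have h8 := hbig (m + 1) (by omega)
      rw [sub_add_cancel] at h3 h4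
      omega
    · have h1 := hlow k
      have h2 := hrle k
      have h3 := hbig (k + 1) (by omega)
      omega
  have h1 := hcoh k
  have h2 := hsum k
  have h3 := hrank k
  have h4 := hrank (k - 1)
  have h5 := hud (k - 1)
  rw [sub_add_cancel] at h5
  omega

end Morse

/-! ### The sign combinatorics -/

/-- Normal pattern (minuses, then pluses) on `[l, r)`. -/
def Nrm (s : ℕ → Option Bool) (l r : ℕ) : Prop :=
  (∀ i, l ≤ i → i < r → s i ≠ none) ∧
    ∀ i, l ≤ i → i + 1 < r → s i = some true → s (i + 1) = some true

/-- The pivots of the matching. -/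
def PivN (n : ℕ) (s : ℕ → Option Bool) (u v : ℕ) : Prop :=
  (2 ≤ u ∧ v = u + 1 ∧ s 0 ≠ none ∧ s 1 ≠ none ∧ Nrm s 2 u) ∨
  (3 ≤ u ∧ v = u + 1 ∧ (s 0 = none ∨ s 1 = none) ∧ Nrm s 3 u) ∨
  (u = 0 ∧ v = 2 ∧ s 1 ≠ none ∧ Nrm s 3 n) ∨
  (u = 1 ∧ v = 2 ∧ s 0 = some false ∧ Nrm s 3 n) ∨
  (u = 2 ∧ v = 1 ∧ s 0 = some true ∧ s 3 = some true ∧ Nrm s 3 n)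

theorem Nrm.congr {s t : ℕ → Option Bool} {l r : ℕ} (h : ∀ i, l ≤ i → i < r → s i = t i)
    (hs : Nrm s l r) : Nrm t l r := by
  refine ⟨fun i h1 h2 => ?_, fun i h1 h2 h3 => ?_⟩
  · rw [← h i h1 h2]; exact hs.1 i h1 h2
  · rw [← h (i + 1) (by omega) h2]
    exact hs.2 i h1 h2 (by rw [h i h1 (by omega)]; exact h3)

theorem PivN.congr {n : ℕ} {s t : ℕ → Option Bool} {u v : ℕ}
    (h : ∀ i, i ≠ u → i ≠ v → s i = t i) (hs : PivN n s u v) : PivN n t u v := by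
  rcases hs with ⟨h1, rfl, h2, h3, h4⟩ | ⟨h1, rfl, h2, h4⟩ | ⟨rfl, rfl, h2, h4⟩ |
    ⟨rfl, rfl, h2, h4⟩ | ⟨rfl, rfl, h2, h3, h4⟩
  · refine Or.inl ⟨h1, rfl, ?_, ?_, h4.congr fun i _ _ => h i (by omega) (by omega)⟩
    · rw [← h 0 (by omega) (by omega)]; exact h2
    · rw [← h 1 (by omega) (by omega)]; exact h3
  · refine Or.inr (Or.inl ⟨h1, rfl, ?_, h4.congr fun i _ _ => h i (by omega) (by omega)⟩)
    rw [← h 0 (by omega) (by omega), ← h 1 (by omega) (by omega)]; exact h2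
  · refine Or.inr (Or.inr (Or.inl ⟨rfl, rfl, ?_, h4.congr fun i _ _ => h i (by omega) (by omega)⟩))
    rw [← h 1 (by omega) (by omega)]; exact h2
  · refine Or.inr (Or.inr (Or.inr (Or.inl ⟨rfl, rfl, ?_,
      h4.congr fun i _ _ => h i (by omega) (by omega)⟩)))
    rw [← h 0 (by omega) (by omega)]; exact h2
  · refine Or.inr (Or.inr (Or.inr (Or.inr ⟨rfl, rfl, ?_, ?_,
      h4.congr fun i _ _ => h i (by omega) (by omega)⟩)))
    · rw [← h 0 (by omega) (by omega)]; exact h2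
    · rw [← h 3 (by omega) (by omega)]; exact h3

/-- No pivot of type Up inside a normal range. -/
theorem Nrm.lt_none {s : ℕ → Option Bool} {l r p : ℕ} (h : Nrm s l r) (hp : s p = none)
    (hl : l ≤ p) : r ≤ p := by
  by_contra hc
  exact h.1 p hl (by omega) hp

theorem Nrm.lt_desc {s : ℕ → Option Bool} {l r p : ℕ} (h : Nrm s l r) (hp : s p = some true)
    (hp' : s (p + 1) = some false) (hl : l ≤ p) : r ≤ p + 1 := by
  by_contra hc
  have := h.2 p hl (by omega) hp
  rw [hp'] at this
  simp at this

theorem Nrm.prop {s : ℕ → Option Bool} {l r p q : ℕ} (h : Nrm s l r) (hp : s p = some true)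
    (hl : l ≤ p) (hpq : p ≤ q) (hq : q < r) : s q = some true := by
  induction q, hpq using Nat.le_induction with
  | base => exact hp
  | succ q hpq ih => exact h.2 q (by omega) hq (ih (by omega))

theorem PivN.up_unique {n : ℕ} {s : ℕ → Option Bool} {u v x y : ℕ} (hu : s u = none)
    (hv : s v = none) (hx : s x = none) (hy : s y = none) (hun : u < n) (hxn : x < n)
    (h : PivN n s u v) (h' : PivN n s x y) : u = x ∧ v = y := by
  have nu : ∀ l r, Nrm s l r → l ≤ u → r ≤ u := fun l r h => h.lt_none hu
  have nx : ∀ l r, Nrm s l r → l ≤ x → r ≤ x := fun l r h => h.lt_none hx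
  have nv : ∀ l r, Nrm s l r → l ≤ v → r ≤ v := fun l r h => h.lt_none hv
  have ny : ∀ l r, Nrm s l r → l ≤ y → r ≤ y := fun l r h => h.lt_none hy
  rcases h with ⟨h1, rfl, h2, h3, h4⟩ | ⟨h1, rfl, h2, h4⟩ | ⟨rfl, rfl, h2, h4⟩ |
    ⟨rfl, rfl, h2, h4⟩ | ⟨rfl, rfl, h2, h3, h4⟩ <;>
  rcases h' with ⟨g1, rfl, g2, g3, g4⟩ | ⟨g1, rfl, g2, g4⟩ | ⟨rfl, rfl, g2, g4⟩ |
    ⟨rfl, rfl, g2, g4⟩ | ⟨rfl, rfl, g2, g3, g4⟩ <;>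
  grind

theorem PivN.dn_unique {n : ℕ} {s : ℕ → Option Bool} {u v x y : ℕ} (hu : s u = some true)
    (hv : s v = some false) (hx : s x = some true) (hy : s y = some false) (hun : v < n)
    (hxn : y < n)
    (h : PivN n s u v) (h' : PivN n s x y) : u = x ∧ v = y := by
  have du : ∀ l r, Nrm s l r → l ≤ u → v = u + 1 → r ≤ u + 1 :=
    fun l r h h1 h2 => h.lt_desc hu (h2 ▸ hv) h1
  have dx : ∀ l r, Nrm s l r → l ≤ x → y = x + 1 → r ≤ x + 1 :=
    fun l r h h1 h2 => h.lt_desc hx (h2 ▸ hy) h1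
  rcases h with ⟨h1, rfl, h2, h3, h4⟩ | ⟨h1, rfl, h2, h4⟩ | ⟨rfl, rfl, h2, h4⟩ |
    ⟨rfl, rfl, h2, h4⟩ | ⟨rfl, rfl, h2, h3, h4⟩ <;>
  rcases h' with ⟨g1, rfl, g2, g3, g4⟩ | ⟨g1, rfl, g2, g4⟩ | ⟨rfl, rfl, g2, g4⟩ |
    ⟨rfl, rfl, g2, g4⟩ | ⟨rfl, rfl, g2, g3, g4⟩ <;>
  grind

theorem PivN.up_dn {n : ℕ} {s : ℕ → Option Bool} {u v x y : ℕ} (hu : s u = none)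
    (hv : s v = none) (hx : s x = some true) (hy : s y = some false) (hun : u < n) (hxn : y < n)
    (h : PivN n s u v) (h' : PivN n s x y) : False := by
  have nu : ∀ l r, Nrm s l r → l ≤ u → r ≤ u := fun l r h => h.lt_none hu
  have dx : ∀ l r, Nrm s l r → l ≤ x → y = x + 1 → r ≤ x + 1 :=
    fun l r h h1 h2 => h.lt_desc hx (h2 ▸ hy) h1
  rcases h with ⟨h1, rfl, h2, h3, h4⟩ | ⟨h1, rfl, h2, h4⟩ | ⟨rfl, rfl, h2, h4⟩ |
    ⟨rfl, rfl, h2, h4⟩ | ⟨rfl, rfl, h2, h3, h4⟩ <;>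
  rcases h' with ⟨g1, rfl, g2, g3, g4⟩ | ⟨g1, rfl, g2, g4⟩ | ⟨rfl, rfl, g2, g4⟩ |
    ⟨rfl, rfl, g2, g4⟩ | ⟨rfl, rfl, g2, g3, g4⟩ <;>
  grind

/-- The edge relation of `D_n` on naturals. -/
def EdgeN (u v : ℕ) : Prop :=
  (u = 0 ∧ v = 2) ∨ (u = 2 ∧ v = 0) ∨ (1 ≤ u ∧ v = u + 1) ∨ (1 ≤ v ∧ u = v + 1)

set_option maxHeartbeats 4000000 in
theorem PivN.order {n : ℕ} (hn : 4 ≤ n) {s t : ℕ → Option Bool} {u v a b x y : ℕ}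
    (hu : s u = some true) (hv : s v = some false) (huv : PivN n s u v)
    (ha : s a = some true) (hb : s b = some false) (hab : EdgeN a b)
    (hta : t a = none) (htb : t b = none) (hst : ∀ i, i ≠ a → i ≠ b → s i = t i)
    (hx : t x = none) (hy : t y = none) (hxy : PivN n t x y)
    (hvn : v < n) (hun : u < n) (han : a < n) (hbn : b < n) (hxn : x < n) (hyn : y < n) :
    (a = u ∧ b = v) ∨ (¬ (u = 2 ∧ v = 1) ∧ ((x = 2 ∧ y = 1) ∨ b < y)) := by
  have nx : ∀ l r, Nrm t l r → l ≤ x → r ≤ x := fun l r h => h.lt_none hx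
  have na : ∀ l r, Nrm t l r → l ≤ a → r ≤ a := fun l r h => h.lt_none hta
  have nb : ∀ l r, Nrm t l r → l ≤ b → r ≤ b := fun l r h => h.lt_none htb
  have du : ∀ l r, Nrm s l r → l ≤ u → v = u + 1 → r ≤ u + 1 :=
    fun l r h h1 h2 => h.lt_desc hu (h2 ▸ hv) h1
  have da : ∀ l r, Nrm s l r → l ≤ a → b = a + 1 → r ≤ a + 1 :=
    fun l r h h1 h2 => h.lt_desc ha (h2 ▸ hb) h1
  have s0 := hst 0
  have s1 := hst 1
  have s2 := hst 2
  have s3 := hst 3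
  have sx := hst x
  have sy := hst y
  have nx' : ∀ l r, Nrm s l r → l ≤ x → s x = none → r ≤ x := fun l r h h1 h2 => h.lt_none h2 h1
  have nb : ∀ l r, Nrm s l r → l ≤ b → a = b + 1 → s b = some false := fun _ _ _ _ _ => hb
  have su := hst u
  have sv := hst v
  have du' : ∀ l r, Nrm t l r → l ≤ u → v = u + 1 → t u = some true → t v = some false →
      r ≤ u + 1 := fun l r h h1 h2 h3 h4 => h.lt_desc h3 (h2 ▸ h4) h1
  have pb : ∀ l r, Nrm s l r → l ≤ 3 → s 3 = some true → 3 ≤ b → b < r → s b = some true :=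
    fun l r h h1 h2 h3 h4 => h.prop h2 h1 h3 h4
  rcases hab with ⟨rfl, rfl⟩ | ⟨rfl, rfl⟩ | ⟨h0, rfl⟩ | ⟨h0, rfl⟩ <;>
  rcases huv with ⟨h1, rfl, h2, h3, h4⟩ | ⟨h1, rfl, h2, h4⟩ | ⟨rfl, rfl, h2, h4⟩ |
    ⟨rfl, rfl, h2, h4⟩ | ⟨rfl, rfl, h2, h3, h4⟩ <;>
  rcases hxy with ⟨g1, rfl, g2, g3, g4⟩ | ⟨g1, rfl, g2, g4⟩ | ⟨rfl, rfl, g2, g4⟩ |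
    ⟨rfl, rfl, g2, g4⟩ | ⟨rfl, rfl, g2, g3, g4⟩ <;>
  grind

/-! ### The Dynkin diagram -/

theorem dynkin_adj {n : ℕ} {u v : Fin n} : (dynkinD n).Adj u v ↔ EdgeN u v := by
  unfold dynkinD EdgeN
  rw [SimpleGraph.fromRel_adj, ne_eq, Fin.ext_iff]
  omega

/-- Signs indexed by naturals. -/
def sg {n : ℕ} (s : Fin n → Option Bool) (i : ℕ) : Option Bool :=
  if h : i < n then s ⟨i, h⟩ else none

theorem sg_val {n : ℕ} (s : Fin n → Option Bool) (i : Fin n) : sg s i = s i := by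
  simp [sg]

/-- The pivot predicate. -/
def PivF {n : ℕ} (C : Config (dynkinD n)) (u v : Fin n) : Prop := PivN n (sg C.sign) u v

theorem pivF_rel {n : ℕ} (C C' : Config (dynkinD n)) (u v : Fin n) (h : Rel C C' u v) :
    PivF C u v ↔ PivF C' u v := by
  have key : ∀ i : ℕ, i ≠ u → i ≠ v → sg C.sign i = sg C'.sign i := by
    intro i hu hv
    unfold sg
    split_ifs with hi
    · rw [h.2.2.1]
      · intro hc; exact hu (by rw [← hc])
      · intro hc; exact hv (by rw [← hc])
    · rfl
  exact ⟨fun h => h.congr key, fun h => h.congr fun i a b => (key i a b).symm⟩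

theorem sg_none {n : ℕ} {C : Config (dynkinD n)} {u v : Fin n} (h : s(u, v) ∈ C.red) :
    sg C.sign u = none ∧ sg C.sign v = none := by
  rw [sg_val, sg_val]; exact red_sign h

theorem pivF_up {n : ℕ} (C : Config (dynkinD n)) (u v x y : Fin n) (h : s(u, v) ∈ C.red)
    (hp : PivF C u v) (h' : s(x, y) ∈ C.red) (hp' : PivF C x y) : u = x ∧ v = y := by
  have := PivN.up_unique (sg_none h).1 (sg_none h).2 (sg_none h').1 (sg_none h').2 u.2 x.2 hp hp'
  exact ⟨Fin.ext this.1, Fin.ext this.2⟩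

theorem pivF_dn {n : ℕ} (C : Config (dynkinD n)) (u v x y : Fin n) (_ : (dynkinD n).Adj u v)
    (hu : C.sign u = some true) (hv : C.sign v = some false)
    (hp : PivF C u v) (_ : (dynkinD n).Adj x y) (hx : C.sign x = some true)
    (hy : C.sign y = some false) (hp' : PivF C x y) : u = x ∧ v = y := by
  rw [← sg_val C.sign] at hu hv hx hy
  have := PivN.dn_unique hu hv hx hy v.2 y.2 hp hp'
  exact ⟨Fin.ext this.1, Fin.ext this.2⟩

theorem pivF_up_dn {n : ℕ} (C : Config (dynkinD n)) (h : Up PivF C) : ¬ Dn PivF C := by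
  rintro ⟨x, y, -, hx, hy, hp'⟩
  obtain ⟨u, v, h, hp⟩ := h
  rw [← sg_val C.sign] at hx hy
  exact PivN.up_dn (sg_none h).1 (sg_none h).2 hx hy u.2 y.2 hp hp'

/-- The order used for triangularity. -/
noncomputable def omg {n : ℕ} (C : Config (dynkinD n)) : ℕ :=
  if h : Up PivF C then
    if (h.choose : ℕ) = 2 ∧ (h.choose_spec.choose : ℕ) = 1 then
      (∑ x : Fin n, (x : ℕ)) + n + 1
    else wt (fun x : Fin n => (x : ℕ)) C + h.choose_spec.choose
  else 0

theorem omg_eq {n : ℕ} {C : Config (dynkinD n)} {u v : Fin n} (h : s(u, v) ∈ C.red)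
    (hp : PivF C u v) : omg C = if (u : ℕ) = 2 ∧ (v : ℕ) = 1 then
      (∑ x : Fin n, (x : ℕ)) + n + 1 else wt (fun x : Fin n => (x : ℕ)) C + v := by
  have hU : Up PivF C := ⟨u, v, h, hp⟩
  have hs := hU.choose_spec.choose_spec
  have := pivF_up C u v _ _ h hp hs.1 hs.2
  unfold omg
  rw [dif_pos hU, ← this.2, ← this.1]

theorem wt_le {n : ℕ} (C : Config (dynkinD n)) :
    wt (fun x : Fin n => (x : ℕ)) C ≤ ∑ x : Fin n, (x : ℕ) := by
  unfold wt
  refine Finset.sum_le_sum fun x _ => ?_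
  split_ifs <;> simp

theorem omg_lt {n : ℕ} (hn : 4 ≤ n) (C C' C1 : Config (dynkinD n)) (u v a b : Fin n)
    (h : Rel C C' u v) (hp : PivF C u v) (h1 : Rel C1 C' a b) (hU : Up PivF C1) (hne : C1 ≠ C) :
    omg C < omg C1 := by
  obtain ⟨x, y, hxy, hpxy⟩ := hU
  rw [omg_eq h.1 hp, omg_eq hxy hpxy]
  have hu := h.2.2.2.1
  have hv := h.2.2.2.2
  have ha := h1.2.2.2.1
  have hb := h1.2.2.2.2
  rw [← sg_val C'.sign] at hu hv ha hb
  have hst : ∀ i : ℕ, i ≠ a → i ≠ b → sg C'.sign i = sg C1.sign i := by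
    intro i hu hv
    unfold sg
    split_ifs with hi
    · rw [h1.2.2.1]
      · intro hc; exact hu (by rw [← hc])
      · intro hc; exact hv (by rw [← hc])
    · rfl
  have key := PivN.order hn hu hv ((pivF_rel C C' u v h).1 hp) ha hb (dynkin_adj.1 h1.adj)
    (sg_none h1.1).1 (sg_none h1.1).2 hst (sg_none hxy).1 (sg_none hxy).2 hpxy v.2 u.2 a.2 b.2
    x.2 y.2
  rcases key with ⟨e1, e2⟩ | ⟨k1, k2⟩
  · have e1 := Fin.ext e1
    have e2 := Fin.ext e2
    subst e1; subst e2
    exact absurd (h1.left_unique h) hne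
  · rw [if_neg k1]
    have w1 := h.wt_eq (fun x : Fin n => (x : ℕ))
    have w2 := h1.wt_eq (fun x : Fin n => (x : ℕ))
    have w3 := wt_le C'
    split_ifs with hs
    · omega
    · have := k2.resolve_left hs
      omega

/-- Red edges, indexed by naturals. -/
def redN {n : ℕ} (C : Config (dynkinD n)) (i j : ℕ) : Prop :=
  ∃ (hi : i < n) (hj : j < n), s((⟨i, hi⟩ : Fin n), (⟨j, hj⟩ : Fin n)) ∈ C.red

theorem redN_facts {n : ℕ} {C : Config (dynkinD n)} {i j : ℕ} (h : redN C i j) :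
    i < n ∧ j < n ∧ EdgeN i j ∧ sg C.sign i = none ∧ sg C.sign j = none := by
  obtain ⟨hi, hj, h⟩ := h
  refine ⟨hi, hj, ?_, (sg_none h).1, (sg_none h).2⟩
  have : (dynkinD n).Adj ⟨i, hi⟩ ⟨j, hj⟩ := C.matching.1 _ h
  exact dynkin_adj.1 this

theorem redN_symm {n : ℕ} {C : Config (dynkinD n)} {i j : ℕ} (h : redN C i j) : redN C j i := by
  obtain ⟨hi, hj, h⟩ := h
  exact ⟨hj, hi, by rw [Sym2.eq_swap]; exact h⟩

theorem redN_inj {n : ℕ} {C : Config (dynkinD n)} {i j k : ℕ} (h : redN C i j)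
    (h' : redN C i k) : j = k := by
  obtain ⟨hi, hj, h⟩ := h
  obtain ⟨_, hk, h'⟩ := h'
  by_contra hne
  refine C.matching.2 _ h _ h' ?_ ⟨i, hi⟩ (by simp) (by simp)
  simp [Fin.ext_iff, hne]
  omega

theorem none_red {n : ℕ} {C : Config (dynkinD n)} {i : ℕ} (hi : i < n)
    (h : sg C.sign i = none) : ∃ j, redN C i j := by
  have h' : C.sign ⟨i, hi⟩ = none := by rw [← h]; simp [sg, hi]
  obtain ⟨e, he, hie⟩ := (C.sign_none _).1 h'
  induction e using Sym2.ind with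
  | _ x y =>
  rw [Sym2.mem_iff] at hie
  rcases hie with rfl | rfl
  · exact ⟨y, hi, y.2, he⟩
  · exact ⟨x, hi, x.2, by rw [Sym2.eq_swap]; exact he⟩

theorem not_up {n : ℕ} {C : Config (dynkinD n)} (h : ¬ Up PivF C) {i j : ℕ} (hr : redN C i j) :
    ¬ PivN n (sg C.sign) i j := by
  intro hp
  obtain ⟨hi, hj, hr⟩ := hr
  exact h ⟨_, _, hr, hp⟩

theorem not_dn {n : ℕ} {C : Config (dynkinD n)} (h : ¬ Dn PivF C) {i j : ℕ} (hi : i < n)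
    (hj : j < n) (he : EdgeN i j) (h1 : sg C.sign i = some true) (h2 : sg C.sign j = some false) :
    ¬ PivN n (sg C.sign) i j := by
  intro hp
  refine h ⟨⟨i, hi⟩, ⟨j, hj⟩, dynkin_adj.2 he, ?_, ?_, hp⟩
  · rw [← sg_val C.sign]; exact h1
  · rw [← sg_val C.sign]; exact h2

theorem not_nrm {s : ℕ → Option Bool} {l n : ℕ} (h : ¬ Nrm s l n) :
    ∃ p, l ≤ p ∧ p < n ∧ Nrm s l p ∧
      (s p = none ∨ (p + 1 < n ∧ s p = some true ∧ s (p + 1) = some false)) := by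
  have hex : ∃ r, ¬ Nrm s l r := ⟨n, h⟩
  have hr := Nat.find_spec hex
  have hmin : ∀ q, q < Nat.find hex → Nrm s l q := fun q hq => not_not.1 (Nat.find_min hex hq)
  have hrn : Nat.find hex ≤ n := Nat.find_min' hex h
  generalize Nat.find hex = r at *
  rcases r with _ | r
  · exact absurd ⟨fun i _ h => absurd h (by omega), fun i _ h => absurd h (by omega)⟩ hr
  have hN := hmin r (by omega)
  by_cases hl : l ≤ r
  · by_cases hs : s r = none
    · exact ⟨r, hl, by omega, hN, Or.inl hs⟩
    · by_cases hd : ∃ p, r = p + 1 ∧ l ≤ p ∧ s p = some true ∧ s r = some false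
      · obtain ⟨p, rfl, h1, h2, h3⟩ := hd
        exact ⟨p, h1, by omega, hmin p (by omega), Or.inr ⟨by omega, h2, h3⟩⟩
      · exfalso
        apply hr
        refine ⟨fun i h1 h2 => ?_, fun i h1 h2 h3 => ?_⟩
        · rcases eq_or_ne i r with rfl | hne
          · exact hs
          · exact hN.1 i h1 (by omega)
        · rcases eq_or_ne (i + 1) r with rfl | hne
          · rcases hh : s (i + 1) with _ | _ | _
            · exact absurd hh hs
            · exact absurd ⟨i, rfl, h1, h3, hh⟩ hd
            · rfl
          · exact hN.2 i h1 (by omega) h3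
  · exact absurd ⟨fun i _ h => absurd h (by omega), fun i _ h => absurd h (by omega)⟩ hr

theorem nrm_form {s : ℕ → Option Bool} {l n : ℕ} (h : Nrm s l n) (hln : l ≤ n) :
    ∃ j, l ≤ j ∧ j ≤ n ∧ ∀ i, l ≤ i → i < n → s i = some (decide (j ≤ i)) := by
  have hex : ∃ r, l ≤ r ∧ (r = n ∨ s r = some true) := ⟨n, hln, Or.inl rfl⟩
  have hr := Nat.find_spec hex
  have hmin : ∀ q, q < Nat.find hex → ¬ (l ≤ q ∧ (q = n ∨ s q = some true)) :=
    fun q hq => Nat.find_min hex hq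
  have hrn : Nat.find hex ≤ n := Nat.find_min' hex ⟨hln, Or.inl rfl⟩
  generalize Nat.find hex = r at *
  refine ⟨r, hr.1, hrn, fun i h1 h2 => ?_⟩
  by_cases hi : r ≤ i
  · rw [h.prop (hr.2.resolve_left (by omega)) hr.1 hi h2]; simp [hi]
  · have h3 := hmin i (by omega)
    have h4 := h.1 i h1 h2
    rcases hh : s i with _ | _ | _
    · exact absurd hh h4
    · simp [hi]
    · exact absurd ⟨h1, Or.inr hh⟩ h3

/-- Critical configurations of the first type. -/
def TA {n : ℕ} (C : Config (dynkinD n)) (j : ℕ) : Prop :=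
  ∀ i, i < n → sg C.sign i = some (decide (j ≤ i))

/-- Critical configurations of the second type. -/
def TB {n : ℕ} (C : Config (dynkinD n)) (j : ℕ) : Prop :=
  sg C.sign 0 = some true ∧ sg C.sign 1 = none ∧ sg C.sign 2 = none ∧
    ∀ i, 3 ≤ i → i < n → sg C.sign i = some (decide (j + 3 ≤ i))

theorem crit_form {n : ℕ} (hn : 4 ≤ n) {C : Config (dynkinD n)} (hU : ¬ Up PivF C)
    (hD : ¬ Dn PivF C) : (∃ j, j ≤ n ∧ TA C j) ∨ (∃ j, 1 ≤ j ∧ j + 3 ≤ n ∧ TB C j) := by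
  set s := sg C.sign with hs
  by_cases h01 : s 0 ≠ none ∧ s 1 ≠ none
  · obtain ⟨h0, h1⟩ := h01
    by_cases hN : Nrm s 2 n
    · obtain ⟨j, hj1, hj2, hj⟩ := nrm_form hN (by omega)
      have hN3 : Nrm s 3 n := ⟨fun i a b => hN.1 i (by omega) b, fun i a b => hN.2 i (by omega) b⟩
      have e2 := hj 2 (by omega) (by omega)
      have e3 := hj 3 (by omega) (by omega)
      have d1 := fun a b => not_dn hD (i := 0) (j := 2) (by omega) (by omega) (by unfold EdgeN; omega) a b
      have d2 := fun a b => not_dn hD (i := 1) (j := 2) (by omega) (by omega) (by unfold EdgeN; omega) a b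
      have d3 := fun a b => not_dn hD (i := 2) (j := 1) (by omega) (by omega) (by unfold EdgeN; omega) a b
      rw [← hs] at d1 d2 d3
      simp only [PivN] at d1 d2 d3
      have e2t : j = 2 → s 2 = some true ∧ s 3 = some true := by
        rintro rfl; exact ⟨by rw [e2]; simp, by rw [e3]; simp⟩
      have e2f : j ≠ 2 → s 2 = some false := by
        intro h; rw [e2]; simp; omega
      left
      have hcase : (s 0 = some false ∧ s 1 = some false) ∨
          (s 0 = some false ∧ s 1 = some true ∧ j = 2) ∨
          (s 0 = some true ∧ s 1 = some true ∧ j = 2) := by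
        clear e2 e3 hj hs
        clear_value s
        rcases c0 : s 0 with _ | _ | _ <;> rcases c1 : s 1 with _ | _ | _ <;>
          by_cases hj2 : j = 2 <;> simp_all
      rcases hcase with ⟨c0, c1⟩ | ⟨c0, c1, rfl⟩ | ⟨c0, c1, rfl⟩
      · refine ⟨j, hj2, fun i hi => ?_⟩
        rw [← hs]
        rcases i with _ | _ | i
        · rw [c0]; simp; omega
        · rw [c1]; simp; omega
        · exact hj _ (by omega) hi
      · refine ⟨1, by omega, fun i hi => ?_⟩
        rw [← hs]
        rcases i with _ | _ | i
        · rw [c0]; simp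
        · rw [c1]; simp
        · rw [hj _ (by omega) hi]; simp
      · refine ⟨0, by omega, fun i hi => ?_⟩
        rw [← hs]
        rcases i with _ | _ | i
        · rw [c0]; simp
        · rw [c1]; simp
        · rw [hj _ (by omega) hi]; simp
    · exfalso
      obtain ⟨p, hp1, hp2, hp3, hp4 | ⟨hp4, hp5, hp6⟩⟩ := not_nrm hN
      · obtain ⟨q, hq⟩ := none_red hp2 hp4
        have hf := redN_facts hq
        have hu := not_up hU hq
        rw [← hs] at hf hu
        obtain ⟨-, -, he, -, hqn⟩ := hf
        rcases he with ⟨rfl, rfl⟩ | ⟨rfl, rfl⟩ | ⟨h, rfl⟩ | ⟨h, rfl⟩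
        · omega
        · exact h0 hqn
        · exact hu (Or.inl ⟨hp1, rfl, h0, h1, hp3⟩)
        · rcases eq_or_ne q 1 with rfl | hq1
          · exact h1 hqn
          · exact hp3.1 q (by omega) (by omega) hqn
      · exact not_dn hD hp2 hp4 (by unfold EdgeN; omega) hp5 hp6
          (Or.inl ⟨hp1, rfl, h0, h1, hp3⟩)
  · have hor : s 0 = none ∨ s 1 = none := by tauto
    have hq : ∃ q, redN C q 2 ∧ q < 2 := by
      rcases hor with h | h
      · obtain ⟨q, hq⟩ := none_red (by omega) h
        have := (redN_facts hq).2.2.1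
        have : q = 2 := by unfold EdgeN at this; omega
        subst this
        exact ⟨0, hq, by omega⟩
      · obtain ⟨q, hq⟩ := none_red (by omega) h
        have := (redN_facts hq).2.2.1
        have : q = 2 := by unfold EdgeN at this; omega
        subst this
        exact ⟨1, hq, by omega⟩
    obtain ⟨q, hq, hq2⟩ := hq
    have h2n := (redN_facts hq).2.2.2.2
    rw [← hs] at h2n
    have honly : ∀ r, r < 2 → s r = none → r = q := by
      intro r hr hrn
      obtain ⟨x, hx⟩ := none_red (C := C) (i := r) (by omega) hrn
      have := (redN_facts hx).2.2.1
      have : x = 2 := by unfold EdgeN at this; omega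
      subst this
      exact redN_inj (redN_symm hx) (redN_symm hq)
    by_cases hN : Nrm s 3 n
    · obtain ⟨j, hj1, hj2, hj⟩ := nrm_form hN (by omega)
      have hu := not_up hU hq
      have hu' := not_up hU (redN_symm hq)
      rw [← hs] at hu hu'
      have hqn := (redN_facts hq).2.2.2.1
      rw [← hs] at hqn
      have e3 := hj 3 (by omega) (by omega)
      simp only [PivN] at hu hu'
      obtain rfl | rfl : q = 0 ∨ q = 1 := by omega
      · exfalso
        have := honly 1
        grind
      · right
        have h0 := honly 0 (by omega)
        refine ⟨j - 3, ?_, by omega, ?_, hqn, h2n, ?_⟩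
        · by_contra hc
          have : j = 3 := by omega
          subst this
          rcases c0 : s 0 with _ | _ | _ <;> grind
        · rw [← hs]
          rcases c0 : s 0 with _ | _ | _ <;> grind
        · intro i h1 h2
          rw [← hs, hj i h1 h2]
          congr 2
          rw [eq_iff_iff]
          omega
    · exfalso
      obtain ⟨p, hp1, hp2, hp3, hp4 | ⟨hp4, hp5, hp6⟩⟩ := not_nrm hN
      · obtain ⟨r, hr⟩ := none_red hp2 hp4
        have hf := redN_facts hr
        have hu := not_up hU hr
        rw [← hs] at hf hu
        obtain ⟨-, -, he, -, hrn⟩ := hf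
        rcases he with ⟨rfl, rfl⟩ | ⟨rfl, rfl⟩ | ⟨h, rfl⟩ | ⟨h, rfl⟩
        · omega
        · omega
        · exact hu (Or.inr (Or.inl ⟨hp1, rfl, hor, hp3⟩))
        · rcases eq_or_ne r 2 with rfl | hr1
          · have := redN_inj (redN_symm hr) (redN_symm hq)
            omega
          · exact hp3.1 r (by omega) (by omega) hrn
      · exact not_dn hD hp2 hp4 (by unfold EdgeN; omega) hp5 hp6
          (Or.inr (Or.inl ⟨hp1, rfl, hor, hp3⟩))

theorem TA_crit {n : ℕ} (hn : 4 ≤ n) {C : Config (dynkinD n)} {j : ℕ} (h : TA C j) :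
    ¬ Up PivF C ∧ ¬ Dn PivF C := by
  constructor
  · rintro ⟨u, v, hr, hp⟩
    have h1 := (sg_none hr).1
    rw [h u u.2] at h1
    simp at h1
  · rintro ⟨u, v, he, hu, hv, hp⟩
    rw [← sg_val C.sign, h u u.2] at hu
    rw [← sg_val C.sign, h v v.2] at hv
    simp at hu hv
    have h0 := h 0 (by omega)
    unfold PivF PivN at hp
    rcases hp with hp | hp | hp | hp | hp
    · omega
    · omega
    · omega
    · omega
    · rw [h0] at hp
      simp at hp
      omega

theorem TB_crit {n : ℕ} (hn : 4 ≤ n) {C : Config (dynkinD n)} {j : ℕ} (hj : 1 ≤ j)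
    (h : TB C j) : ¬ Up PivF C ∧ ¬ Dn PivF C := by
  obtain ⟨h0, h1, h2, h3⟩ := h
  have h33 := h3 3 le_rfl (by omega)
  have h33' : sg C.sign 3 = some false := by rw [h33]; simp; omega
  constructor
  · rintro ⟨u, v, hr, hp⟩
    have hu := (sg_none hr).1
    have hv := (sg_none hr).2
    have h3u := h3 u
    have := u.2
    unfold PivF PivN at hp
    grind
  · rintro ⟨u, v, he, hu, hv, hp⟩
    rw [← sg_val C.sign] at hu hv
    have h3u := h3 u
    have h3v := h3 v
    have := u.2
    have := v.2
    unfold PivF PivN at hp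
    grind

theorem sg_ext {n : ℕ} {C C' : Config (dynkinD n)}
    (h : ∀ i, i < n → sg C.sign i = sg C'.sign i) (x : Fin n) : C.sign x = C'.sign x := by
  rw [← sg_val C.sign, ← sg_val C'.sign]; exact h x x.2

theorem TA_red {n : ℕ} {C : Config (dynkinD n)} {j : ℕ} (h : TA C j) : C.red = ∅ := by
  rw [Finset.eq_empty_iff_forall_notMem]
  intro e he
  induction e using Sym2.ind with
  | _ u v =>
  have h1 := (sg_none he).1
  rw [h u u.2] at h1
  simp at h1

theorem TA_unique {n : ℕ} {C C' : Config (dynkinD n)} {j : ℕ} (h : TA C j) (h' : TA C' j) :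
    C = C' := by
  apply config_ext
  · intro e; rw [TA_red h, TA_red h']
  · exact sg_ext fun i hi => by rw [h i hi, h' i hi]

theorem TB_red {n : ℕ} (hn : 4 ≤ n) {C : Config (dynkinD n)} {j : ℕ} (h : TB C j) :
    C.red = {s((⟨1, by omega⟩ : Fin n), (⟨2, by omega⟩ : Fin n))} := by
  obtain ⟨h0, h1, h2, h3⟩ := h
  have honly : ∀ i, i < n → sg C.sign i = none → i = 1 ∨ i = 2 := by
    intro i hi hs
    have := h3 i
    by_contra hc
    rcases Nat.lt_or_ge i 3 with hlt | hge
    · have : i = 0 := by omega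
      subst this
      rw [h0] at hs
      simp at hs
    · rw [this hge hi] at hs
      simp at hs
  have key : ∀ i j, redN C i j → (i = 1 ∧ j = 2) ∨ (i = 2 ∧ j = 1) := by
    intro i j hr
    obtain ⟨a, b, c, d, e⟩ := redN_facts hr
    have := honly i a d
    have := honly j b e
    unfold EdgeN at c
    omega
  ext e
  rw [Finset.mem_singleton]
  constructor
  · intro he
    induction e using Sym2.ind with
    | _ u v =>
    rw [Sym2.eq_iff, Fin.ext_iff, Fin.ext_iff, Fin.ext_iff, Fin.ext_iff]
    exact key u v ⟨u.2, v.2, he⟩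
  · rintro rfl
    obtain ⟨q, hq⟩ := none_red (by omega) h1
    have := key 1 q hq
    have : q = 2 := by omega
    subst this
    obtain ⟨_, _, hq⟩ := hq
    exact hq

theorem TB_unique {n : ℕ} (hn : 4 ≤ n) {C C' : Config (dynkinD n)} {j : ℕ} (h : TB C j)
    (h' : TB C' j) : C = C' := by
  apply config_ext
  · intro e; rw [TB_red hn h, TB_red hn h']
  · refine sg_ext fun i hi => ?_
    obtain ⟨h0, h1, h2, h3⟩ := h
    obtain ⟨g0, g1, g2, g3⟩ := h'
    rcases i with _ | _ | _ | i
    · rw [h0, g0]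
    · rw [h1, g1]
    · rw [h2, g2]
    · rw [h3 _ (by omega) hi, g3 _ (by omega) hi]

theorem TA_exists (n j : ℕ) : ∃ C : Config (dynkinD n), TA C j := by
  refine ⟨⟨∅, ⟨by simp, by simp⟩, fun x => some (decide (j ≤ (x : ℕ))), by simp⟩, ?_⟩
  intro i hi
  simp [sg, hi]

theorem TB_exists {n : ℕ} (hn : 4 ≤ n) (j : ℕ) : ∃ C : Config (dynkinD n), TB C j := by
  obtain ⟨C', hC'⟩ : ∃ C' : Config (dynkinD n), C'.red = ∅ ∧ ∀ x, C'.sign x =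
      some (decide ((x : ℕ) = 0 ∨ (x : ℕ) = 1 ∨ j + 3 ≤ (x : ℕ))) :=
    ⟨⟨∅, ⟨by simp, by simp⟩, fun x => some (decide ((x : ℕ) = 0 ∨ (x : ℕ) = 1 ∨ j + 3 ≤ (x : ℕ))),
      by simp⟩, rfl, fun x => rfl⟩
  obtain ⟨C, hr⟩ := exists_contract (C' := C') (u := ⟨1, by omega⟩) (v := ⟨2, by omega⟩)
    (dynkin_adj.2 (by unfold EdgeN; simp)) (by rw [hC'.2]; simp) (by rw [hC'.2]; simp)
  have hn1 := hr.none.1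
  have hn2 := hr.none.2
  rw [← sg_val C.sign] at hn1 hn2
  have hoff : ∀ i, i < n → i ≠ 1 → i ≠ 2 → sg C.sign i = some (decide (i = 0 ∨ i = 1 ∨ j + 3 ≤ i)) := by
    intro i hi h1 h2
    have := hr.2.2.1 ⟨i, hi⟩ (by simp [h1]) (by simp [h2])
    rw [hC'.2] at this
    simp only [sg, hi, dif_pos]
    exact this.symm
  refine ⟨C, ?_, hn1, hn2, ?_⟩
  · rw [hoff 0 (by omega) (by omega) (by omega)]; simp
  · intro i h1 h2
    rw [hoff i h2 (by omega) (by omega)]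
    congr 2
    rw [eq_iff_iff]
    omega

theorem card_fin_range {n a b : ℕ} (h : b ≤ n) :
    (Finset.univ.filter fun x : Fin n => a ≤ (x : ℕ) ∧ (x : ℕ) < b).card = b - a := by
  rw [← Nat.card_Ico]
  refine Finset.card_bij (fun x _ => (x : ℕ)) ?_ ?_ ?_
  · intro x hx; simpa using hx
  · intro x _ y _ h; exact Fin.ext h
  · intro i hi
    rw [Finset.mem_Ico] at hi
    exact ⟨⟨i, by omega⟩, by simpa using hi, rfl⟩

theorem TA_Qg {n : ℕ} {C : Config (dynkinD n)} {j : ℕ} (hj : j ≤ n) (h : TA C j) :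
    Qg C = j ∧ Eg C = j := by
  have hQ : Qg C = j := by
    have := card_fin_range (a := 0) hj
    rw [Nat.sub_zero] at this
    rw [← this]
    unfold Qg
    congr 1
    ext x
    rw [Finset.mem_filter, Finset.mem_filter, ← sg_val C.sign, h x x.2]
    simp
  refine ⟨hQ, ?_⟩
  unfold Eg
  rw [hQ, TA_red h]
  simp

theorem TB_Qg {n : ℕ} (hn : 4 ≤ n) {C : Config (dynkinD n)} {j : ℕ} (hj : j + 3 ≤ n)
    (h : TB C j) : Qg C = j ∧ Eg C = j + 1 := by
  have hQ : Qg C = j := by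
    have := card_fin_range (a := 3) hj
    rw [Nat.add_sub_cancel] at this
    rw [← this]
    unfold Qg
    congr 1
    ext x
    rw [Finset.mem_filter, Finset.mem_filter, ← sg_val C.sign]
    obtain ⟨h0, h1, h2, h3⟩ := h
    by_cases hx : 3 ≤ (x : ℕ)
    · rw [h3 x hx x.2]; simp [hx]
    · have : (x : ℕ) = 0 ∨ (x : ℕ) = 1 ∨ (x : ℕ) = 2 := by omega
      rcases this with e | e | e <;> rw [e] <;> simp [h0, h1, h2]
  refine ⟨hQ, ?_⟩
  unfold Eg
  rw [hQ, TB_red hn h]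
  simp

theorem ncrit_eq {n : ℕ} (hn : 4 ≤ n) (k m : ℤ) :
    ncrit (PivF (n := n)) k m = (if k = m ∧ 0 ≤ k ∧ k ≤ (n : ℤ) then 1 else 0) +
        (if m = k + 1 ∧ 1 ≤ k ∧ k ≤ (n : ℤ) - 3 then 1 else 0) := by
  have hform : ∀ a : {C : Config (dynkinD n) // (Qg C : ℤ) = k ∧ (Eg C : ℤ) = m},
      (¬ Up PivF a.1 ∧ ¬ Dn PivF a.1) →
      (k = m ∧ 0 ≤ k ∧ k ≤ (n : ℤ) ∧ TA a.1 k.toNat) ∨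
      (m = k + 1 ∧ 1 ≤ k ∧ k ≤ (n : ℤ) - 3 ∧ TB a.1 k.toNat) := by
    intro a ha
    have hk := a.2
    rcases crit_form hn ha.1 ha.2 with ⟨j, hj, h⟩ | ⟨j, hj1, hj2, h⟩
    · left
      obtain ⟨e1, e2⟩ := TA_Qg hj h
      rw [e1, e2] at hk
      obtain ⟨rfl, rfl⟩ := hk
      exact ⟨rfl, by omega, by omega, by simpa using h⟩
    · right
      obtain ⟨e1, e2⟩ := TB_Qg hn hj2 h
      rw [e1, e2] at hk
      obtain ⟨rfl, rfl⟩ := hk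
      exact ⟨by push_cast; rfl, by omega, by omega, by simpa using h⟩
  unfold ncrit
  by_cases hA : k = m ∧ 0 ≤ k ∧ k ≤ (n : ℤ)
  · rw [if_pos hA, if_neg (by omega), add_zero, Finset.card_eq_one]
    obtain ⟨C, hC⟩ := TA_exists n k.toNat
    obtain ⟨e1, e2⟩ := TA_Qg (by omega) hC
    refine ⟨⟨C, by omega, by omega⟩, ?_⟩
    ext a
    rw [Finset.mem_filter, Finset.mem_singleton]
    constructor
    · rintro ⟨-, ha⟩
      rcases hform a ha with h | h
      · exact Subtype.ext (TA_unique h.2.2.2 hC)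
      · omega
    · rintro rfl
      exact ⟨Finset.mem_univ _, TA_crit hn hC⟩
  · rw [if_neg hA, zero_add]
    by_cases hB : m = k + 1 ∧ 1 ≤ k ∧ k ≤ (n : ℤ) - 3
    · rw [if_pos hB, Finset.card_eq_one]
      obtain ⟨C, hC⟩ := TB_exists hn k.toNat
      obtain ⟨e1, e2⟩ := TB_Qg hn (by omega) hC
      refine ⟨⟨C, by omega, by omega⟩, ?_⟩
      ext a
      rw [Finset.mem_filter, Finset.mem_singleton]
      constructor
      · rintro ⟨-, ha⟩
        rcases hform a ha with h | h
        · omega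
        · exact Subtype.ext (TB_unique hn h.2.2.2 hC)
      · rintro rfl
        exact ⟨Finset.mem_univ _, TB_crit hn (by omega) hC⟩
    · rw [if_neg hB, Finset.card_eq_zero, Finset.filter_eq_empty_iff]
      intro a _ ha
      rcases hform a ha with h | h
      · exact hA ⟨h.1, h.2.1, h.2.2.1⟩
      · exact hB ⟨h.1, h.2.1, h.2.2.1⟩

/-- the Seifert cohomology of the Dynkin diagram `D_n`:
`dim SH^k(D_n,m) = 1` if `k = m` and `0 ≤ k ≤ n`, `1` if `m = k + 1` and
`1 ≤ k ≤ n - 3`, and `0` otherwise. -/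
theorem SHdim_dynkinD (n : ℕ) (hn : 4 ≤ n) (k m : ℤ) :
    SHdim (dynkinD n) k m =
      (if k = m ∧ 0 ≤ k ∧ k ≤ (n : ℤ) then 1 else 0) +
        (if m = k + 1 ∧ 1 ≤ k ∧ k ≤ (n : ℤ) - 3 then 1 else 0) := by
  rw [← ncrit_eq hn k m]
  refine SHdim_of_matching (PivF (n := n)) pivF_rel pivF_up pivF_dn pivF_up_dn omg (omg_lt hn)
    ?_ ?_ k m
  · intro k m h1 h2
    rw [ncrit_eq hn, if_neg (by omega), if_neg (by omega)]
  · intro m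
    rw [ncrit_eq hn, if_neg (c := m = m + 1 ∧ _) (by omega)]
    split_ifs <;> simp

end Seifert
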